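/- Typability characterizes checkers head normalization: (1) Correctness: if π ▷ Γ ⊢^k t : L then there is a checkers head normal form h and an evaluation t →hch^n h with n ≤ |π| whose number of interaction steps is ≤ k. (2) Completeness: if t →hch* h with h a checkers head normal form, then Γ ⊢^k t : L is derivable for some Γ, k, L. Consequently ⟦t⟧⊛ ≠ ∅ if and only if t is →hch-normalizable. -/

import Mathlib

set_option autoImplicit false

/-! ### Players -/

inductive Player : Type
  | white
  | black
deriving DecidableEq

/-- The opposite player. -/
def Player.op : Player → Player
  | .white => .black
  | .black => .white

/-- `gamma p q` is `0` if the players agree (silent) and `1` otherwise (interaction). -/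
def Player.gamma (p q : Player) : ℕ := if p = q then 0 else 1

/-! ### Ordinary λ-terms (de Bruijn representation) -/

inductive Lam : Type
  | var : ℕ → Lam
  | lam : Lam → Lam
  | app : Lam → Lam → Lam
deriving DecidableEq

namespace Lam

/-- Shift the free de Bruijn indices ≥ `d` by one. -/
def liftAt : Lam → ℕ → Lam
  | .var n, d => .var (if n < d then n else n + 1)
  | .lam t, d => .lam (t.liftAt (d + 1))
  | .app t u, d => .app (t.liftAt d) (u.liftAt d)

/-- Capture-avoiding substitution of `u` for the de Bruijn index `x`. -/
def subst : Lam → ℕ → Lam → Lam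
  | .var n, x, u => if n = x then u else if x < n then .var (n - 1) else .var n
  | .lam t, x, u => .lam (t.subst (x + 1) (u.liftAt 0))
  | .app t s, x, u => .app (t.subst x u) (s.subst x u)

end Lam

/-- Root β-rule: `(λx.t) u ↦ t[x:=u]`. -/
inductive LBetaRoot : Lam → Lam → Prop
  | beta (t u : Lam) : LBetaRoot (.app (.lam t) u) (t.subst 0 u)

/-- Root η-rule: `λx. t x ↦ t` with `x ∉ FV(t)` (enforced by the lifting). -/
inductive LEtaRoot : Lam → Lam → Prop
  | eta (t : Lam) : LEtaRoot (.lam (.app (t.liftAt 0) (.var 0))) t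

/-- Closure of a root relation under all contexts. -/
inductive LFull (R : Lam → Lam → Prop) : Lam → Lam → Prop
  | root {t u : Lam} : R t u → LFull R t u
  | lam {t u : Lam} : LFull R t u → LFull R (.lam t) (.lam u)
  | appL {t t' : Lam} (u : Lam) : LFull R t t' → LFull R (.app t u) (.app t' u)
  | appR (t : Lam) {u u' : Lam} : LFull R u u' → LFull R (.app t u) (.app t u')

/-- Closure under applicative spine contexts `⟨·⟩ t1 … tk`. -/
inductive LSpine (R : Lam → Lam → Prop) : Lam → Lam → Prop
  | root {t u : Lam} : R t u → LSpine R t u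
  | appL {t t' : Lam} (u : Lam) : LSpine R t t' → LSpine R (.app t u) (.app t' u)

/-- Closure under head contexts `λx1…xn.⟨·⟩ t1 … tk`. -/
inductive LHead (R : Lam → Lam → Prop) : Lam → Lam → Prop
  | spine {t u : Lam} : LSpine R t u → LHead R t u
  | lam {t u : Lam} : LHead R t u → LHead R (.lam t) (.lam u)

/-- β-reduction. -/
def LBeta : Lam → Lam → Prop := LFull LBetaRoot
/-- η-reduction. -/
def LEta : Lam → Lam → Prop := LFull LEtaRoot
/-- Head reduction. -/
def LHStep : Lam → Lam → Prop := LHead LBetaRoot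
/-- Multistep head reduction. -/
def LHSteps : Lam → Lam → Prop := Relation.ReflTransGen LHStep

/-- β-conversion (reflexive-symmetric-transitive closure of β-reduction). -/
def LBetaConv : Lam → Lam → Prop :=
  Relation.ReflTransGen (fun a b => LBeta a b ∨ LBeta b a)
/-- η-conversion. -/
def LEtaConv : Lam → Lam → Prop :=
  Relation.ReflTransGen (fun a b => LEta a b ∨ LEta b a)

/-- Head normal forms: no head step out of `t`. -/
def Lam.LHNF (t : Lam) : Prop := ∀ u, ¬ LHStep t u

/-- Head convergence: `t ⇓h`. -/
def Lam.HConv (t : Lam) : Prop := ∃ h, LHSteps t h ∧ h.LHNF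

/-- Ordinary contexts (one hole). -/
inductive LCtx : Type
  | hole : LCtx
  | lam : LCtx → LCtx
  | appL : LCtx → Lam → LCtx
  | appR : Lam → LCtx → LCtx

/-- Plugging (allowing variable capture). -/
def LCtx.fill : LCtx → Lam → Lam
  | .hole, t => t
  | .lam C, t => .lam (C.fill t)
  | .appL C u, t => .app (C.fill t) u
  | .appR s C, t => .app s (C.fill t)

/-- Head contextual preorder on λ-terms. -/
def CtxLe (t u : Lam) : Prop := ∀ C : LCtx, (C.fill t).HConv → (C.fill u).HConv

/-! ### Checkers terms -/

inductive CTerm : Type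
  | var : ℕ → CTerm
  | lam : Player → CTerm → CTerm
  | app : Player → CTerm → CTerm → CTerm
deriving DecidableEq

namespace CTerm

/-- Shift the free de Bruijn indices ≥ `d` by one. -/
def liftAt : CTerm → ℕ → CTerm
  | .var n, d => .var (if n < d then n else n + 1)
  | .lam p t, d => .lam p (t.liftAt (d + 1))
  | .app p t u, d => .app p (t.liftAt d) (u.liftAt d)

/-- Capture-avoiding substitution of `u` for the de Bruijn index `x`. -/
def subst : CTerm → ℕ → CTerm → CTerm
  | .var n, x, u => if n = x then u else if x < n then .var (n - 1) else .var n
  | .lam p t, x, u => .lam p (t.subst (x + 1) (u.liftAt 0))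
  | .app p t s, x, u => .app p (t.subst x u) (s.subst x u)

/-- The underlying ordinary λ-term of a checkers term. -/
def untag : CTerm → Lam
  | .var n => .var n
  | .lam _ t => .lam t.untag
  | .app _ t u => .app t.untag u.untag

end CTerm

/-- Player lifting: tag every abstraction and application with player `p`. -/
def Lam.tag : Lam → Player → CTerm
  | .var n, _ => .var n
  | .lam t, p => .lam p (t.tag p)
  | .app t u, p => .app p (t.tag p) (u.tag p)

/-- Silent β root rule: the abstraction and the application carry the same player. -/
inductive SilentRoot : CTerm → CTerm → Prop
  | beta (p : Player) (t u : CTerm) : SilentRoot (.app p (.lam p t) u) (t.subst 0 u)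

/-- Interaction β root rule: the application carries the opposite player of the abstraction. -/
inductive InterRoot : CTerm → CTerm → Prop
  | beta (p : Player) (t u : CTerm) : InterRoot (.app p.op (.lam p t) u) (t.subst 0 u)

/-- Closure of a root relation under all checkers contexts. -/
inductive CFull (R : CTerm → CTerm → Prop) : CTerm → CTerm → Prop
  | root {t u : CTerm} : R t u → CFull R t u
  | lam (p : Player) {t u : CTerm} : CFull R t u → CFull R (.lam p t) (.lam p u)
  | appL (p : Player) {t t' : CTerm} (u : CTerm) : CFull R t t' → CFull R (.app p t u) (.app p t' u)
  | appR (p : Player) (t : CTerm) {u u' : CTerm} : CFull R u u' → CFull R (.app p t u) (.app p t u')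

/-- Closure under applicative spine contexts `⟨·⟩ @_{q1} t1 … @_{qk} tk`. -/
inductive CSpine (R : CTerm → CTerm → Prop) : CTerm → CTerm → Prop
  | root {t u : CTerm} : R t u → CSpine R t u
  | appL (p : Player) {t t' : CTerm} (u : CTerm) : CSpine R t t' → CSpine R (.app p t u) (.app p t' u)

/-- Closure under checkers head contexts `λ_{p1}x1…λ_{pn}xn.⟨·⟩ @_{q1} t1 … @_{qk} tk`. -/
inductive CHead (R : CTerm → CTerm → Prop) : CTerm → CTerm → Prop
  | spine {t u : CTerm} : CSpine R t u → CHead R t u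
  | lam (p : Player) {t u : CTerm} : CHead R t u → CHead R (.lam p t) (.lam p u)

/-- Silent β-reduction `→τ`. -/
def StepTau : CTerm → CTerm → Prop := CFull SilentRoot
/-- Interaction β-reduction `→⊛`. -/
def StepInt : CTerm → CTerm → Prop := CFull InterRoot
/-- Checkers β-reduction `→βch`. -/
def StepBch (t u : CTerm) : Prop := StepTau t u ∨ StepInt t u

/-- Silent head reduction `→hτ`. -/
def HStepTau : CTerm → CTerm → Prop := CHead SilentRoot
/-- Interaction head reduction `→h⊛`. -/
def HStepInt : CTerm → CTerm → Prop := CHead InterRoot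
/-- Checkers head reduction `→hch`. -/
def HStepCh (t u : CTerm) : Prop := HStepTau t u ∨ HStepInt t u

/-- Checkers head normal form. -/
def CTerm.HNF (t : CTerm) : Prop := ∀ u, ¬ HStepCh t u

/-- `BigStep t k` means `t ⇓^k`: the (deterministic) checkers head evaluation of `t`
terminates and performs exactly `k` interaction steps. -/
inductive BigStep : CTerm → ℕ → Prop
  | nf {t : CTerm} : t.HNF → BigStep t 0
  | silent {t u : CTerm} {k : ℕ} : HStepTau t u → BigStep u k → BigStep t k
  | inter {t u : CTerm} {k : ℕ} : HStepInt t u → BigStep u k → BigStep t (k + 1)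

/-- `HRed t n i u`: a checkers head reduction sequence from `t` to `u` of length `n`
containing exactly `i` interaction steps. -/
inductive HRed : CTerm → ℕ → ℕ → CTerm → Prop
  | refl (t : CTerm) : HRed t 0 0 t
  | silent {t u s : CTerm} {n i : ℕ} : HStepTau t u → HRed u n i s → HRed t (n + 1) i s
  | inter {t u s : CTerm} {n i : ℕ} : HStepInt t u → HRed u n i s → HRed t (n + 1) (i + 1) s

/-- Checkers contexts (one hole). -/
inductive CCtx : Type
  | hole : CCtx
  | lam : Player → CCtx → CCtx
  | appL : Player → CCtx → CTerm → CCtx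
  | appR : Player → CTerm → CCtx → CCtx

/-- Plugging (allowing variable capture). -/
def CCtx.fill : CCtx → CTerm → CTerm
  | .hole, t => t
  | .lam p C, t => .lam p (C.fill t)
  | .appL p C u, t => .app p (C.fill t) u
  | .appR p s C, t => .app p s (C.fill t)

/-- Player lifting of ordinary contexts. -/
def LCtx.tag : LCtx → Player → CCtx
  | .hole, _ => .hole
  | .lam C, p => .lam p (C.tag p)
  | .appL C u, p => .appL p (C.tag p) (u.tag p)
  | .appR s C, p => .appR p (s.tag p) (C.tag p)

/-- Checkers interaction preorder `≼ctx⊛` on checkers terms. -/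
def IntCtxLe (t u : CTerm) : Prop :=
  ∀ (C : CCtx) (k : ℕ), BigStep (C.fill t) k → BigStep (C.fill u) k

/-- Checkers interaction improvement `≼imp⊛` on checkers terms. -/
def ImpCtxLe (t u : CTerm) : Prop :=
  ∀ (C : CCtx) (k : ℕ), BigStep (C.fill t) k → ∃ k', k' ≤ k ∧ BigStep (C.fill u) k'

/-- Interaction preorder `⊑int` on ordinary λ-terms, via black lifting. -/
def IntLe (t u : Lam) : Prop := IntCtxLe (t.tag .black) (u.tag .black)

/-- Interaction improvement `⊑int·imp` on ordinary λ-terms, via black lifting. -/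
def ImpLe (t u : Lam) : Prop := ImpCtxLe (t.tag .black) (u.tag .black)

/-- Interaction equivalence `≡int`. -/
def IntEq (t u : Lam) : Prop := IntLe t u ∧ IntLe u t

/-- Silent conversion `=τ`: reflexive-symmetric-transitive closure of `→τ`. -/
def SilentConv : CTerm → CTerm → Prop :=
  Relation.ReflTransGen (fun a b => StepTau a b ∨ StepTau b a)


/-! ### Checkers multi types -/

/-- Linear types: an atom `X` and arrows `M →_{p,q} L`, where a multi type `M`
is a finite multiset of linear types (syntactically represented as a list). -/
inductive LType : Type
  | atom : LType
  | arrow : List LType → Player → Player → LType → LType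

/-- Type environments: a multi type for every de Bruijn index. -/
abbrev TEnv : Type := ℕ → Multiset LType

/-- The empty type environment. -/
def TEnv.zero : TEnv := fun _ => 0

/-- Pointwise multiset union of type environments. -/
def TEnv.add (Γ Δ : TEnv) : TEnv := fun n => Γ n + Δ n

/-- The environment assigning `[L]` to `x` and `0` elsewhere. -/
def TEnv.single (x : ℕ) (L : LType) : TEnv := fun n => if n = x then {L} else 0

/-- Extend an environment with a multi type for the freshly bound de Bruijn index `0`. -/
def TEnv.cons (M : Multiset LType) (Γ : TEnv) : TEnv := fun n =>
  match n with
  | 0 => M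
  | n + 1 => Γ n

mutual
  /-- Type derivations `π ▷ Γ ⊢^k t : L` of the checkers multi type system. -/
  inductive Deriv : TEnv → ℕ → CTerm → LType → Type
    | ax (x : ℕ) (L : LType) : Deriv (TEnv.single x L) 0 (.var x) L
    | lam {Γ : TEnv} {k : ℕ} {t : CTerm} {L : LType} (p q : Player) (M : List LType) :
        Deriv (TEnv.cons (Multiset.ofList M) Γ) k t L →
        Deriv Γ k (.lam p t) (.arrow M p q L)
    | app {Γ Δ : TEnv} {k₁ k₂ : ℕ} {t u : CTerm} {M : List LType} {p q : Player} {L : LType} :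
        Deriv Γ k₁ t (.arrow M p q L) → DerivM Δ k₂ u M →
        Deriv (TEnv.add Γ Δ) (k₁ + k₂ + Player.gamma p q) (.app q t u) L
  /-- Derivations `Γ ⊢^k t : M` of a multi type (the `many` rule). -/
  inductive DerivM : TEnv → ℕ → CTerm → List LType → Type
    | nil (t : CTerm) : DerivM TEnv.zero 0 t []
    | cons {Γ Δ : TEnv} {k k' : ℕ} {t : CTerm} {L : LType} {M : List LType} :
        Deriv Γ k t L → DerivM Δ k' t M → DerivM (TEnv.add Γ Δ) (k + k') t (L :: M)
end

mutual
  /-- The (applicative) size `|π|` of a derivation: its number of `@` rules. -/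
  def Deriv.size {Γ : TEnv} {k : ℕ} {t : CTerm} {L : LType} : Deriv Γ k t L → ℕ
    | .ax _ _ => 0
    | .lam _ _ _ π => Deriv.size π
    | .app π μ => Deriv.size π + DerivM.size μ + 1
  /-- Size of a multi-type derivation. -/
  def DerivM.size {Γ : TEnv} {k : ℕ} {t : CTerm} {M : List LType} : DerivM Γ k t M → ℕ
    | .nil _ => 0
    | .cons π μ => Deriv.size π + DerivM.size μ
end

/-- Typability `Γ ⊢^k t : L`. -/
def TJ (Γ : TEnv) (k : ℕ) (t : CTerm) (L : LType) : Prop := Nonempty (Deriv Γ k t L)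

/-- Checkers relational interpretation `⟦t⟧⊛ = {(Γ, k, L) | Γ ⊢^k t : L}`. -/
def CSem (t : CTerm) : Set (TEnv × ℕ × LType) := {x | TJ x.1 x.2.1 t x.2.2}

/-- Black type preorder `⊑•type` on ordinary λ-terms. -/
def BTypeLe (t u : Lam) : Prop := CSem (t.tag .black) ⊆ CSem (u.tag .black)

/-! ### Tight typings -/

/-- All arrows occurring in a linear type are silent (`p = q`). -/
inductive AllSilent : LType → Prop
  | atom : AllSilent .atom
  | arrow {M : List LType} {p : Player} {L : LType} :
      (∀ L' ∈ M, AllSilent L') → AllSilent L → AllSilent (.arrow M p p L)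

/-- The number of nonempty multi types occurring in a linear type. -/
def LType.neCount : LType → ℕ
  | .atom => 0
  | .arrow M _ _ L =>
      min M.length 1 + (M.attach.map fun x => LType.neCount x.1).sum + LType.neCount L
decreasing_by
  · have := List.sizeOf_lt_of_mem x.2
    simp only [LType.arrow.sizeOf_spec]
    omega
  · simp only [LType.arrow.sizeOf_spec]
    omega

/-- The number of nonempty multi types occurring in a multi type (counting itself). -/
def mNeCount (m : Multiset LType) : ℕ :=
  min (Multiset.card m) 1 + (m.map LType.neCount).sum

/-- A typing `(Γ, L)` is tight when all the multi types occurring in `Γ` and `L`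
are empty except for exactly one, and all arrows occurring in `(Γ, L)` are silent. -/
def Tight (Γ : TEnv) (L : LType) : Prop :=
  AllSilent L ∧ (∀ n : ℕ, ∀ L' ∈ Γ n, AllSilent L') ∧
    ∃ S : Finset ℕ, (∀ n : ℕ, n ∉ S → Γ n = 0) ∧
      (∑ n ∈ S, mNeCount (Γ n)) + LType.neCount L = 1

/-!
Read the typings of `t` with type `L` as the set of triples `(Γ, k, s)` of an environment, a number
of interactions and a derivation size. All three add up in the typing rules, so the `many` rule is a
pointwise sum of sets, and `t[x:=u]` is typed exactly by trading the entry `M` of `x` in a typing of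
`t` for a typing of `u` with `M`. Hence a head step with `g ∈ {0, 1}` interactions translates the
set of typings by `(∅, g, 1)`. Read from left to right, the size strictly decreases along head
reduction, which therefore stops and is bounded by `s` and `k`; read from right to left, a typing of
a head normal form, which exists because arguments may be left untyped, lifts to every term
reducing to it.
-/

open scoped Pointwise

/-! ### Sums of sets -/

section SetSums

variable {α A B : Type*}

section Many

variable [AddCommMonoid A] [AddCommMonoid B]

/-- The `many` rule: `many F [x₁, …, xₙ] = F x₁ + ⋯ + F xₙ`. When `A` is a type of sets, the sum is
the pointwise one, and its elements are the sums of one choice from each `F xᵢ`. -/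
def many (F : α → A) : Multiset α →+ A :=
  Multiset.sumAddMonoidHom.comp (Multiset.mapAddMonoidHom F)

@[simp]
theorem many_singleton (F : α → A) (x : α) : many F {x} = F x := by
  simp [many]

@[simp]
theorem many_cons (F : α → A) (x : α) (m : Multiset α) : many F (x ::ₘ m) = F x + many F m := by
  simp [many]

theorem map_many (g : A →+ B) (F : α → A) (m : Multiset α) :
    g (many F m) = many (fun x => g (F x)) m := by
  simp [many, map_multiset_sum]

end Many

variable [AddZeroClass A] [AddZeroClass B]

/-- The extension of a set-valued additive map `φ` to sets of arguments. -/
def biUnionHom (φ : A →+ Set B) : Set A →+ Set B where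
  toFun S := ⋃ a ∈ S, φ a
  map_zero' := by simp
  map_add' S T := by
    simp only [← Set.image2_add, Set.biUnion_image2, map_add, Set.image2_iUnion_left,
      Set.image2_iUnion_right]
    exact Set.iUnion₂_comm _

theorem biUnionHom_apply (φ : A →+ Set B) (S : Set A) : biUnionHom φ S = ⋃ a ∈ S, φ a := rfl

theorem biUnionHom_iUnion {ι : Sort*} (φ : A →+ Set B) (S : ι → Set A) :
    biUnionHom φ (⋃ i, S i) = ⋃ i, biUnionHom φ (S i) := by
  simp only [biUnionHom_apply, Set.biUnion_iUnion]

@[simp]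
theorem biUnionHom_singleton (φ : A →+ Set B) (a : A) : biUnionHom φ {a} = φ a := by
  simp [biUnionHom_apply]

end SetSums

/-! ### Weighted environments -/

section InsertNth

variable {V : Type*}

/-- The sequence `f 0, …, f (x - 1), v, f x, …`. -/
def insertNth (x : ℕ) (v : V) (f : ℕ → V) : ℕ → V :=
  fun n => if n < x then f n else if n = x then v else f (n - 1)

/-- Insertion of an entry at position `x`; the inverse extracts the entry. -/
def insertNthAddEquiv (V : Type*) [Add V] (x : ℕ) : V × (ℕ → V) ≃+ (ℕ → V) where
  toFun p := insertNth x p.1 p.2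
  invFun f := (f x, fun n => f (if n < x then n else n + 1))
  left_inv p := by
    ext n <;> grind [insertNth]
  right_inv f := by
    funext n
    grind [insertNth]
  map_add' p q := by
    funext n
    simp only [insertNth, Prod.fst_add, Prod.snd_add, Pi.add_apply]
    split_ifs <;> rfl

theorem insertNth_succ_insertNth_zero (x : ℕ) (v w : V) (f : ℕ → V) :
    insertNth (x + 1) v (insertNth 0 w f) = insertNth 0 w (insertNth x v f) := by
  funext n
  grind [insertNth]

theorem insertNth_zero_zero [Zero V] (x : ℕ) : insertNth x (0 : V) 0 = 0 := by
  funext n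
  simp [insertNth]

end InsertNth

namespace TEnv

theorem cons_eq_insertNth (M : Multiset LType) (Γ : TEnv) : cons M Γ = insertNth 0 M Γ := by
  funext n
  cases n <;> simp [cons, insertNth]

theorem single_eq_insertNth (x : ℕ) (L : LType) : single x L = insertNth x {L} 0 := by
  funext n
  simp only [single, insertNth, Pi.zero_apply]
  split_ifs <;> grind

theorem single_lift_eq_insertNth (d n : ℕ) (L : LType) :
    single (if n < d then n else n + 1) L = insertNth d 0 (single n L) := by
  funext m
  grind [single, insertNth]

end TEnv

/-- Weighted environments `(Γ, k, s)`: the judgments `Γ ⊢^k` paired with a derivation size `s`.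
Contexts, interaction counts and sizes all add up in the typing rules, so a single additive
monoid can track them together. -/
abbrev WEnv : Type := TEnv × ℕ × ℕ

namespace WEnv

/-- The weighted environment `Γ, x : M`, where the de Bruijn indices of `Γ` from `x` on are
shifted. -/
def extendAt (x : ℕ) : Multiset LType × WEnv ≃+ WEnv :=
  AddEquiv.prodAssoc.symm.trans
    ((insertNthAddEquiv (Multiset LType) x).prodCongr (AddEquiv.refl (ℕ × ℕ)))

theorem extendAt_mk (x : ℕ) (M : Multiset LType) (Γ : TEnv) (c : ℕ × ℕ) :
    extendAt x (M, Γ, c) = (insertNth x M Γ, c) := rfl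

theorem extendAt_succ_extendAt_zero (x : ℕ) (M N : Multiset LType) (a : WEnv) :
    extendAt (x + 1) (M, extendAt 0 (N, a)) = extendAt 0 (N, extendAt x (M, a)) :=
  congrArg (·, a.2) (insertNth_succ_insertNth_zero x M N a.1)

theorem extendAt_cost (x : ℕ) (c : ℕ × ℕ) : extendAt x (0, 0, c) = (0, c) :=
  congrArg (·, c) (insertNth_zero_zero x)

theorem extendAt_add_right (x : ℕ) (M : Multiset LType) (a b : WEnv) :
    extendAt x (M, a + b) = extendAt x (M, a) + extendAt x (0, b) := by
  rw [← map_add, Prod.mk_add_mk M 0 a b, add_zero]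

theorem mk_add_cost (Γ : TEnv) (k s : ℕ) (c : ℕ × ℕ) :
    ((Γ, k, s) + (0, c) : WEnv) = (Γ, k + c.1, s + c.2) :=
  congrArg (·, (k, s) + c) (add_zero Γ)

end WEnv

open WEnv

/-! ### Typings as sets of weighted environments -/

/-- The set of all `(Γ, k, s)` such that `Γ ⊢^k t : L` has a derivation of size `s`. -/
def typings : CTerm → LType → Set WEnv
  | .var x, L => {(TEnv.single x L, 0)}
  | .lam _ _, .atom => ∅
  | .lam p t, .arrow M p' _ L => {a | p' = p ∧ extendAt 0 (↑M, a) ∈ typings t L}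
  | .app q t u, L => ⋃ (M : List LType) (p : Player),
      typings t (.arrow M p q L) + many (typings u) ↑M + {(0, Player.gamma p q, 1)}

mutual
  theorem Deriv.mem_typings {Γ : TEnv} {k : ℕ} {t : CTerm} {L : LType} :
      (π : Deriv Γ k t L) → (Γ, k, π.size) ∈ typings t L
    | .ax _ _ => by
      simp only [typings, Deriv.size]
      exact Set.mem_singleton _
    | .lam _ _ _ π => by
      refine ⟨rfl, ?_⟩
      rw [Deriv.size, extendAt_mk, ← TEnv.cons_eq_insertNth]
      exact π.mem_typings
    | .app π μ => by
      simp only [typings, Deriv.size, Set.mem_iUnion]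
      refine ⟨_, _, _, Set.add_mem_add π.mem_typings μ.mem_many_typings, _, rfl, ?_⟩
      exact mk_add_cost _ _ _ _
  theorem DerivM.mem_many_typings {Γ : TEnv} {k : ℕ} {t : CTerm} {M : List LType} :
      (μ : DerivM Γ k t M) → (Γ, k, μ.size) ∈ many (typings t) ↑M
    | .nil _ => by
      simp only [DerivM.size]
      rfl
    | .cons π μ => by
      rw [DerivM.size, ← Multiset.cons_coe, many_cons]
      exact Set.add_mem_add π.mem_typings μ.mem_many_typings
end

theorem exists_derivM_of_mem_many {t : CTerm}
    (ht : ∀ {Γ k s L}, (Γ, k, s) ∈ typings t L → ∃ π : Deriv Γ k t L, π.size = s)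
    (M : List LType) {Γ : TEnv} {k s : ℕ} (h : (Γ, k, s) ∈ many (typings t) ↑M) :
    ∃ μ : DerivM Γ k t M, μ.size = s := by
  induction M generalizing Γ k s with
  | nil =>
    cases h
    exact ⟨.nil t, rfl⟩
  | cons L M ih =>
    rw [← Multiset.cons_coe, many_cons] at h
    obtain ⟨⟨Γ₁, k₁, s₁⟩, h₁, ⟨Γ₂, k₂, s₂⟩, h₂, ⟨⟩⟩ := h
    obtain ⟨π, rfl⟩ := ht h₁
    obtain ⟨μ, rfl⟩ := ih h₂
    exact ⟨.cons π μ, rfl⟩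

theorem mem_typings_iff {Γ : TEnv} {k s : ℕ} {t : CTerm} {L : LType} :
    (Γ, k, s) ∈ typings t L ↔ ∃ π : Deriv Γ k t L, π.size = s := by
  refine ⟨fun h => ?_, fun ⟨π, hπ⟩ => hπ ▸ π.mem_typings⟩
  induction t generalizing Γ k s L with
  | var x =>
    cases h
    exact ⟨.ax x L, rfl⟩
  | lam p t ih =>
    cases L with
    | atom => exact h.elim
    | arrow M p' q L =>
      obtain ⟨rfl, h⟩ := h
      rw [extendAt_mk, ← TEnv.cons_eq_insertNth] at h
      obtain ⟨π, rfl⟩ := ih h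
      exact ⟨.lam p' q M π, rfl⟩
  | app q t u iht ihu =>
    simp only [typings, Set.mem_iUnion] at h
    obtain ⟨M, p, _, ⟨⟨Γ₁, k₁, s₁⟩, h₁, ⟨Γ₂, k₂, s₂⟩, h₂, rfl⟩, _, rfl, h⟩ := h
    cases (mk_add_cost _ _ _ _).symm.trans h
    obtain ⟨π, rfl⟩ := iht h₁
    obtain ⟨μ, rfl⟩ := exists_derivM_of_mem_many ihu M h₂
    exact ⟨.app π μ, rfl⟩

/-! ### Lifting and substitution -/

/-- Lifting and substitution are both instances of this principle. The parameter `i` of such an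
operation changes to `next i` under a binder. -/
theorem typings_eq_biUnionHom {ι : Type*} {f : ι → CTerm → CTerm} {next : ι → ι}
    {φ : ι → WEnv →+ Set WEnv}
    (f_lam : ∀ i p t, f i (.lam p t) = .lam p (f (next i) t))
    (f_app : ∀ i q t u, f i (.app q t u) = .app q (f i t) (f i u))
    (φ_single : ∀ i n L, φ i (TEnv.single n L, 0) = typings (f i (.var n)) L)
    (φ_extend : ∀ i M a,
      φ (next i) (extendAt 0 (M, a)) = (fun b => extendAt 0 (M, b)) '' φ i a)
    (φ_cost : ∀ i c, φ i (0, c) = {(0, c)}) (t : CTerm) (i : ι) (L : LType) :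
    typings (f i t) L = biUnionHom (φ i) (typings t L) := by
  induction t generalizing i L with
  | var n => simp only [typings, biUnionHom_singleton, φ_single]
  | lam p t ih =>
    rw [f_lam]
    cases L with
    | atom => simp [typings, biUnionHom_apply]
    | arrow M p' q L =>
      ext a
      simp only [typings, ih, biUnionHom_apply, Set.mem_ofPred_eq, Set.mem_iUnion, exists_prop]
      constructor
      · rintro ⟨hp, b, hb, ha⟩
        obtain ⟨⟨N, b⟩, rfl⟩ := (extendAt 0).surjective b
        rw [φ_extend] at ha
        obtain ⟨a', ha', h⟩ := ha
        cases (extendAt 0).injective h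
        exact ⟨b, ⟨hp, hb⟩, ha'⟩
      · rintro ⟨b, ⟨hp, hb⟩, ha⟩
        exact ⟨hp, _, hb, φ_extend i M b ▸ Set.mem_image_of_mem _ ha⟩
  | app q t u iht ihu =>
    simp only [f_app, typings, iht, funext (ihu i), biUnionHom_iUnion, map_add, map_many,
      biUnionHom_singleton, φ_cost]

/-- The action of lifting on weighted environments. -/
def liftHom (d : ℕ) : WEnv →+ Set WEnv :=
  Set.singletonAddMonoidHom.comp
    ((extendAt d).toAddMonoidHom.comp (AddMonoidHom.inr (Multiset LType) WEnv))

theorem liftHom_apply (d : ℕ) (a : WEnv) : liftHom d a = {extendAt d (0, a)} := rfl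

theorem typings_liftAt (t : CTerm) (d : ℕ) (L : LType) :
    typings (t.liftAt d) L = biUnionHom (liftHom d) (typings t L) := by
  refine typings_eq_biUnionHom (f := fun d t => t.liftAt d) (next := (· + 1)) (φ := liftHom)
    (fun _ _ _ => rfl) (fun _ _ _ _ => rfl) (fun d n L => ?_) (fun d M a => ?_)
    (fun d c => ?_) t d L
  · simp only [CTerm.liftAt, typings, liftHom_apply, TEnv.single_lift_eq_insertNth, extendAt_mk]
  · simp only [liftHom_apply, Set.image_singleton, extendAt_succ_extendAt_zero]
  · rw [liftHom_apply, extendAt_cost]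

/-- The action on weighted environments of substituting for index `x` a term with typings `U`:
the entry `M` of `x` is traded for a typing of that term with `M`. -/
def substHom (x : ℕ) (U : LType → Set WEnv) : WEnv →+ Set WEnv :=
  ((many U).coprod Set.singletonAddMonoidHom).comp (extendAt x).symm.toAddMonoidHom

@[simp]
theorem substHom_extendAt (x : ℕ) (U : LType → Set WEnv) (M : Multiset LType) (a : WEnv) :
    substHom x U (extendAt x (M, a)) = {a} + many U M := by
  simp [substHom, add_comm]

theorem substHom_succ_liftAt (x : ℕ) (u : CTerm) (M : Multiset LType) (a : WEnv) :
    substHom (x + 1) (typings (u.liftAt 0)) (extendAt 0 (M, a)) =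
      (fun b => extendAt 0 (M, b)) '' substHom x (typings u) a := by
  obtain ⟨⟨N, a⟩, rfl⟩ := (extendAt x).surjective a
  rw [← extendAt_succ_extendAt_zero, substHom_extendAt, substHom_extendAt,
    funext (typings_liftAt u 0), ← map_many]
  simp only [biUnionHom_apply, liftHom_apply, ← Set.image_eq_iUnion, Set.singleton_add,
    Set.image_image, extendAt_add_right]

theorem substHom_single (x n : ℕ) (u : CTerm) (L : LType) :
    substHom x (typings u) (TEnv.single n L, 0) = typings ((CTerm.var n).subst x u) L := by
  rcases eq_or_ne n x with rfl | hne
  · rw [TEnv.single_eq_insertNth, ← extendAt_mk, substHom_extendAt]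
    simp [CTerm.subst, ← Prod.zero_eq_mk]
  · obtain ⟨m, rfl⟩ : ∃ m, n = if m < x then m else m + 1 :=
      ⟨if n < x then n else n - 1, by grind⟩
    have subst_var : (CTerm.var (if m < x then m else m + 1)).subst x u = .var m := by
      grind [CTerm.subst]
    rw [subst_var, TEnv.single_lift_eq_insertNth, ← extendAt_mk, substHom_extendAt, map_zero,
      add_zero]
    rfl

theorem typings_subst (t u : CTerm) (x : ℕ) (L : LType) :
    typings (t.subst x u) L = biUnionHom (substHom x (typings u)) (typings t L) := by
  refine typings_eq_biUnionHom (f := fun i t => t.subst i.1 i.2)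
    (next := fun i => (i.1 + 1, i.2.liftAt 0)) (φ := fun i => substHom i.1 (typings i.2))
    (fun _ _ _ => rfl) (fun _ _ _ _ => rfl) (fun i n L => substHom_single i.1 n i.2 L)
    (fun i M a => substHom_succ_liftAt i.1 i.2 M a) (fun i c => ?_) t (x, u) L
  rw [← extendAt_cost i.1, substHom_extendAt, map_zero, add_zero, extendAt_cost]

/-! ### Quantitative subject reduction and expansion -/

theorem typings_beta (p q : Player) (t u : CTerm) (L : LType) :
    typings (.app q (.lam p t) u) L =
      typings (t.subst 0 u) L + {(0, Player.gamma p q, 1)} := by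
  ext a
  simp only [typings_subst, typings, biUnionHom_apply, Set.mem_iUnion, Set.mem_add,
    Set.mem_ofPred_eq, exists_prop]
  constructor
  · rintro ⟨M, _, _, ⟨b, ⟨rfl, hb⟩, c, hc, rfl⟩, _, rfl, rfl⟩
    refine ⟨b + c, ⟨_, hb, ?_⟩, _, rfl, rfl⟩
    rw [substHom_extendAt]
    exact Set.add_mem_add rfl hc
  · rintro ⟨_, ⟨b, hb, hbc⟩, _, rfl, rfl⟩
    obtain ⟨⟨M, b⟩, rfl⟩ := (extendAt 0).surjective b
    rw [substHom_extendAt] at hbc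
    obtain ⟨b, rfl, c, hc, rfl⟩ := hbc
    refine ⟨M.toList, p, _, ⟨b, ⟨rfl, ?_⟩, c, ?_, rfl⟩, _, rfl, rfl⟩ <;>
      rwa [Multiset.coe_toList]

/-- The steps of `R` have cost `(k, s)` when the typings of the source are exactly those of the
target with `k` more interactions and `s` more application rules: subject reduction and expansion
in one equation. -/
def HasCost (R : CTerm → CTerm → Prop) (c : ℕ × ℕ) : Prop :=
  ∀ ⦃t u⦄, R t u → ∀ L, typings t L = typings u L + {(0, c)}

theorem SilentRoot.hasCost : HasCost SilentRoot (0, 1) := by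
  rintro _ _ ⟨p, t, u⟩ L
  simpa [Player.gamma] using typings_beta p p t u L

theorem InterRoot.hasCost : HasCost InterRoot (1, 1) := by
  rintro _ _ ⟨p, t, u⟩ L
  have gamma_op : Player.gamma p p.op = 1 := by cases p <;> rfl
  rw [typings_beta, gamma_op]

namespace HasCost

variable {R : CTerm → CTerm → Prop} {c : ℕ × ℕ}

theorem spine (hR : HasCost R c) : HasCost (CSpine R) c := by
  intro t u h
  induction h with
  | root h => exact hR h
  | appL q r _ ih =>
    intro L
    simp only [typings, ih, Set.iUnion_add]
    refine Set.iUnion₂_congr fun M p => ?_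
    ac_rfl

theorem head (hR : HasCost R c) : HasCost (CHead R) c := by
  intro t u h
  induction h with
  | spine h => exact hR.spine h
  | lam p _ ih =>
    rintro (_ | ⟨M, p', q, L⟩)
    · simp [typings]
    · ext a
      simp only [typings, ih, Set.add_singleton, Set.mem_image, Set.mem_ofPred_eq]
      constructor
      · rintro ⟨hp, b, hb, h⟩
        obtain ⟨⟨N, b⟩, rfl⟩ := (extendAt 0).surjective b
        rw [← extendAt_cost 0 c, ← extendAt_add_right] at h
        cases (extendAt 0).injective h
        exact ⟨b, ⟨hp, hb⟩, rfl⟩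
      · rintro ⟨b, ⟨hp, hb⟩, rfl⟩
        exact ⟨hp, _, hb, by rw [extendAt_add_right, extendAt_cost]⟩

end HasCost

theorem HRed.typings_eq {t u : CTerm} {n i : ℕ} (h : HRed t n i u) (L : LType) :
    typings t L = typings u L + {(0, i, n)} := by
  induction h with
  | refl t => exact (add_zero (typings t L)).symm
  | silent step _ ih =>
    rw [SilentRoot.hasCost.head step, ih, add_assoc, Set.singleton_add_singleton]
    rfl
  | inter step _ ih =>
    rw [InterRoot.hasCost.head step, ih, add_assoc, Set.singleton_add_singleton]
    rfl

/-! ### Typability and normalization -/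

theorem HRed.le_of_mem_typings {t u : CTerm} {n i k s : ℕ} {Γ : TEnv} {L : LType}
    (h : HRed t n i u) (ht : (Γ, k, s) ∈ typings t L) : n ≤ s ∧ i ≤ k := by
  rw [h.typings_eq] at ht
  obtain ⟨⟨Γ', k', s'⟩, _, _, rfl, ⟨⟩⟩ := ht
  exact ⟨Nat.le_add_left n s', Nat.le_add_left i k'⟩

theorem exists_hRed_of_mem_typings {t : CTerm} {k s : ℕ} {Γ : TEnv} {L : LType}
    (ht : (Γ, k, s) ∈ typings t L) : ∃ h n i, HRed t n i h ∧ h.HNF := by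
  induction s using Nat.strong_induction_on generalizing t k Γ with
  | _ s ih =>
    by_cases hnf : t.HNF
    · exact ⟨t, 0, 0, .refl t, hnf⟩
    · simp only [CTerm.HNF, not_forall, not_not] at hnf
      obtain ⟨u, step | step⟩ := hnf
      · rw [SilentRoot.hasCost.head step] at ht
        obtain ⟨⟨Γ', k', s'⟩, hu, _, rfl, ⟨⟩⟩ := ht
        obtain ⟨h, n, i, hred, hh⟩ := ih s' (Nat.lt_succ_self s') hu
        exact ⟨h, n + 1, i, .silent step hred, hh⟩
      · rw [InterRoot.hasCost.head step] at ht
        obtain ⟨⟨Γ', k', s'⟩, hu, _, rfl, ⟨⟩⟩ := ht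
        obtain ⟨h, n, i, hred, hh⟩ := ih s' (Nat.lt_succ_self s') hu
        exact ⟨h, n + 1, i + 1, .inter step hred, hh⟩

/-- Neutral terms `y @_{q₁} t₁ … @_{qₖ} tₖ`, the bodies of head normal forms. -/
inductive CTerm.Neutral : CTerm → Prop
  | var (x : ℕ) : Neutral (.var x)
  | app (q : Player) {t : CTerm} (u : CTerm) : Neutral t → Neutral (.app q t u)

theorem silentRoot_or_interRoot (p q : Player) (t u : CTerm) :
    SilentRoot (.app q (.lam p t) u) (t.subst 0 u) ∨
      InterRoot (.app q (.lam p t) u) (t.subst 0 u) := by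
  by_cases h : q = p
  · exact .inl (h ▸ .beta p t u)
  · have q_eq_op : q = p.op := by cases p <;> cases q <;> first | rfl | exact absurd rfl h
    exact .inr (q_eq_op ▸ .beta p t u)

theorem CTerm.neutral_or_eq_lam_or_exists_cSpine (t : CTerm) :
    t.Neutral ∨ (∃ p s, t = .lam p s) ∨ ∃ u, CSpine SilentRoot t u ∨ CSpine InterRoot t u := by
  induction t with
  | var x => exact .inl (.var x)
  | lam p t => exact .inr (.inl ⟨p, t, rfl⟩)
  | app q t r iht _ =>
    obtain neutral | ⟨p, s, rfl⟩ | ⟨u, step | step⟩ := iht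
    · exact .inl (.app q r neutral)
    · exact .inr (.inr ⟨_, (silentRoot_or_interRoot p q s r).imp .root .root⟩)
    · exact .inr (.inr ⟨_, .inl (.appL q r step)⟩)
    · exact .inr (.inr ⟨_, .inr (.appL q r step)⟩)

namespace CTerm

theorem Neutral.typings_nonempty {t : CTerm} (ht : t.Neutral) (L : LType) :
    (typings t L).Nonempty := by
  induction ht generalizing L with
  | var x => exact Set.singleton_nonempty _
  | app q u _ ih =>
    -- The arguments stay untyped: the head variable gets a type `[] →_{q,q} L`.
    obtain ⟨a, ha⟩ := ih (.arrow [] q q L)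
    refine ⟨a + 0 + (0, Player.gamma q q, 1), ?_⟩
    simp only [typings, Set.mem_iUnion]
    exact ⟨[], q, Set.add_mem_add (Set.add_mem_add ha rfl) rfl⟩

theorem HNF.of_lam {p : Player} {t : CTerm} (h : (CTerm.lam p t).HNF) : t.HNF :=
  fun u step => h (.lam p u) (step.imp (.lam p) (.lam p))

theorem HNF.exists_typings_nonempty {t : CTerm} (ht : t.HNF) :
    ∃ L, (typings t L).Nonempty := by
  obtain neutral | ⟨p, s, rfl⟩ | ⟨u, step⟩ := t.neutral_or_eq_lam_or_exists_cSpine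
  · exact ⟨.atom, neutral.typings_nonempty .atom⟩
  · obtain ⟨L, b, hb⟩ := ht.of_lam.exists_typings_nonempty
    obtain ⟨⟨M, a⟩, rfl⟩ := (extendAt 0).surjective b
    exact ⟨.arrow M.toList p p L, a, rfl, by rwa [Multiset.coe_toList]⟩
  · exact absurd (step.imp .spine .spine) (ht u)

end CTerm

theorem HRed.cSem_nonempty {t h : CTerm} {n i : ℕ} (hred : HRed t n i h) (hh : h.HNF) :
    (CSem t).Nonempty := by
  obtain ⟨L, hL⟩ := hh.exists_typings_nonempty
  have typable : (typings t L).Nonempty :=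
    hred.typings_eq L ▸ hL.add (Set.singleton_nonempty _)
  obtain ⟨⟨Γ, k, s⟩, ht⟩ := typable
  obtain ⟨π, -⟩ := mem_typings_iff.1 ht
  exact ⟨(Γ, k, L), ⟨π⟩⟩

/-- Typability characterizes checkers head normalization. -/
theorem typability_characterizes_head_normalization :
    (∀ (Γ : TEnv) (k : ℕ) (t : CTerm) (L : LType) (π : Deriv Γ k t L),
      ∃ (h : CTerm) (n i : ℕ), h.HNF ∧ HRed t n i h ∧ n ≤ π.size ∧ i ≤ k) ∧
    (∀ (t h : CTerm) (n i : ℕ), HRed t n i h → h.HNF →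
      ∃ (Γ : TEnv) (k : ℕ) (L : LType), Nonempty (Deriv Γ k t L)) ∧
    (∀ t : CTerm, CSem t ≠ ∅ ↔ ∃ (h : CTerm) (n i : ℕ), HRed t n i h ∧ h.HNF) := by
  refine ⟨fun Γ k t L π => ?_, fun t h n i hred hnf => ?_, fun t => ?_⟩
  · obtain ⟨h, n, i, hred, hnf⟩ := exists_hRed_of_mem_typings π.mem_typings
    exact ⟨h, n, i, hnf, hred, hred.le_of_mem_typings π.mem_typings⟩
  · obtain ⟨⟨Γ, k, L⟩, typable⟩ := hred.cSem_nonempty hnf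
    exact ⟨Γ, k, L, typable⟩
  · rw [← Set.nonempty_iff_ne_empty]
    constructor
    · rintro ⟨⟨Γ, k, L⟩, ⟨π⟩⟩
      exact exists_hRed_of_mem_typings π.mem_typings
    · rintro ⟨h, n, i, hred, hnf⟩
      exact hred.cSem_nonempty hnf
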